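/- For every z ∈ C_0([0,T]) and every t ∈ [0,T), the oscillating running max/min function satisfies orm[z](t) = z(max(Ā⁺[z](t), Ā⁻[z](t))). -/

import Mathlib

/-!
The key fact is `z (Ā⁺ t) = M⁺ t`, together with its mirror image for the minimum.
Every `s ∈ (t, T]` has `A⁺ s ≤ s` and `z (A⁺ s) = M⁺ s ≥ M⁺ t`. The first fact puts `Ā⁺ t` in
`[0, t]`, so `z (Ā⁺ t) ≤ M⁺ t`; by the second, `Ā⁺ t` is a limit of points of the closed set
`{x ∈ [0, T] | M⁺ t ≤ z x}`, so `z (Ā⁺ t) ≥ M⁺ t`. No monotonicity of `A⁺` is needed, because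
`Ā⁺ t` is defined as an infimum. If `Ā⁺ t = Ā⁻ t`, then `M⁺ t = M⁻ t`, hence `z` vanishes
on `[0, t]`, in agreement with the value `0` of `orm`.
-/

open Set Filter Topology

/-- Running maximum `M⁺[z](t) = max_{s ∈ [0,t]} z(s)`. -/
noncomputable def Mplus (z : ℝ → ℝ) (t : ℝ) : ℝ := sSup (z '' Set.Icc 0 t)

/-- Running minimum `M⁻[z](t) = min_{s ∈ [0,t]} z(s)`. -/
noncomputable def Mminus (z : ℝ → ℝ) (t : ℝ) : ℝ := sInf (z '' Set.Icc 0 t)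

/-- `A⁺[z](t) = min {s ∈ [0,t] | z(s) = M⁺[z](t)}`. -/
noncomputable def Aplus (z : ℝ → ℝ) (t : ℝ) : ℝ :=
  sInf {s | s ∈ Set.Icc 0 t ∧ z s = Mplus z t}

/-- `A⁻[z](t) = min {s ∈ [0,t] | z(s) = M⁻[z](t)}`. -/
noncomputable def Aminus (z : ℝ → ℝ) (t : ℝ) : ℝ :=
  sInf {s | s ∈ Set.Icc 0 t ∧ z s = Mminus z t}

/-- `Ā⁺[z](t) = lim_{δ↓0} A⁺[z](t+δ)` for `t < T` (the right limit of the nondecreasing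
function `A⁺[z]`, which equals the infimum over `s ∈ (t,T]`), and `Ā⁺[z](T) = A⁺[z](T)`. -/
noncomputable def Abarplus (T : ℝ) (z : ℝ → ℝ) (t : ℝ) : ℝ :=
  if t < T then sInf (Aplus z '' Set.Ioc t T) else Aplus z T

/-- `Ā⁻[z](t) = lim_{δ↓0} A⁻[z](t+δ)` for `t < T`, and `Ā⁻[z](T) = A⁻[z](T)`. -/
noncomputable def Abarminus (T : ℝ) (z : ℝ → ℝ) (t : ℝ) : ℝ :=
  if t < T then sInf (Aminus z '' Set.Ioc t T) else Aminus z T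

/-- The oscillating running max/min function `orm[z]`. -/
noncomputable def orm (T : ℝ) (z : ℝ → ℝ) (t : ℝ) : ℝ :=
  if t < T then
    if Abarminus T z t < Abarplus T z t then Mplus z t
    else if Abarplus T z t < Abarminus T z t then Mminus z t
    else 0
  else z T

theorem Mplus_isGreatest {T : ℝ} {z : ℝ → ℝ} (hz : ContinuousOn z (Set.Icc 0 T)) {t : ℝ}
    (h0 : 0 ≤ t) (hT : t ≤ T) : IsGreatest (z '' Set.Icc 0 t) (Mplus z t) :=
  (isCompact_Icc.image_of_continuousOn
    (hz.mono (Set.Icc_subset_Icc_right hT))).isGreatest_sSup ((Set.nonempty_Icc.2 h0).image z)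

theorem Aplus_mem {T : ℝ} {z : ℝ → ℝ} (hz : ContinuousOn z (Set.Icc 0 T)) {t : ℝ}
    (h0 : 0 ≤ t) (hT : t ≤ T) : Aplus z t ∈ Set.Icc 0 t ∧ z (Aplus z t) = Mplus z t := by
  have hcl : IsClosed {s | s ∈ Set.Icc 0 t ∧ z s = Mplus z t} :=
    (hz.mono (Set.Icc_subset_Icc_right hT)).preimage_isClosed_of_isClosed isClosed_Icc
      (isClosed_singleton (x := Mplus z t))
  obtain ⟨s, hs, hzs⟩ := (Mplus_isGreatest hz h0 hT).1
  exact hcl.csInf_mem ⟨s, hs, hzs⟩ ⟨0, fun x hx => hx.1.1⟩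

/-- The right limit `Ā⁺ t` still lies in `[0, t]` and still attains the running maximum. -/
theorem Abarplus_mem {T : ℝ} {z : ℝ → ℝ} (hz : ContinuousOn z (Set.Icc 0 T)) {t : ℝ}
    (h0 : 0 ≤ t) (hT : t < T) :
    Abarplus T z t ∈ Set.Icc 0 t ∧ z (Abarplus T z t) = Mplus z t := by
  have hA : ∀ s ∈ Set.Ioc t T, Aplus z s ∈ Set.Icc 0 s ∧ z (Aplus z s) = Mplus z s :=
    fun s hs => Aplus_mem hz (h0.trans hs.1.le) hs.2
  have hne : (Aplus z '' Set.Ioc t T).Nonempty := (Set.nonempty_Ioc.2 hT).image _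
  have hbdd : BddBelow (Aplus z '' Set.Ioc t T) := by
    refine ⟨0, ?_⟩
    rintro _ ⟨s, hs, rfl⟩
    exact (hA s hs).1.1
  have hL : Abarplus T z t = sInf (Aplus z '' Set.Ioc t T) := if_pos hT
  have hLt : Abarplus T z t ≤ t := by
    refine le_of_forall_gt_imp_ge_of_dense fun s hs => ?_
    have hm : min s T ∈ Set.Ioc t T := ⟨lt_min hs hT, min_le_right _ _⟩
    rw [hL]
    exact (csInf_le hbdd ⟨_, hm, rfl⟩).trans ((hA _ hm).1.2.trans (min_le_left _ _))
  have hcl : IsClosed (Set.Icc 0 T ∩ z ⁻¹' Set.Ici (Mplus z t)) :=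
    hz.preimage_isClosed_of_isClosed isClosed_Icc isClosed_Ici
  have hsub : Aplus z '' Set.Ioc t T ⊆ Set.Icc 0 T ∩ z ⁻¹' Set.Ici (Mplus z t) := by
    rintro _ ⟨s, hs, rfl⟩
    obtain ⟨h1, h2⟩ := hA s hs
    refine ⟨⟨h1.1, h1.2.trans hs.2⟩, ?_⟩
    change Mplus z t ≤ z (Aplus z s)
    rw [h2]
    exact (Mplus_isGreatest hz (h0.trans hs.1.le) hs.2).2
      (Set.image_mono (Set.Icc_subset_Icc_right hs.1.le) (Mplus_isGreatest hz h0 hT.le).1)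
  have hmem := closure_minimal hsub hcl (csInf_mem_closure hne hbdd)
  rw [← hL] at hmem
  have hI : Abarplus T z t ∈ Set.Icc 0 t := ⟨hmem.1.1, hLt⟩
  exact ⟨hI, le_antisymm ((Mplus_isGreatest hz h0 hT.le).2 ⟨_, hI, rfl⟩) hmem.2⟩

theorem Mminus_eq_neg (z : ℝ → ℝ) (t : ℝ) : Mminus z t = -Mplus (fun s => -z s) t := by
  have h : (fun s => -z s) '' Set.Icc 0 t = -(z '' Set.Icc 0 t) := by
    rw [← Set.image_neg_eq_neg, Set.image_image]
  rw [Mminus, Mplus, h, Real.sInf_def]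

theorem Abarminus_eq (T : ℝ) (z : ℝ → ℝ) : Abarminus T z = Abarplus T (fun s => -z s) := by
  have hA : Aminus z = Aplus (fun s => -z s) := by
    funext t
    simp only [Aminus, Aplus, Mminus_eq_neg, neg_eq_iff_eq_neg]
  funext t
  rw [Abarminus, Abarplus, hA]

/-- For every `z ∈ C_0([0,T])` and every `t ∈ [0,T)`,
`orm[z](t) = z(max(Ā⁺[z](t), Ā⁻[z](t)))`. -/
theorem stmt_10 (T : ℝ) (hT : 0 < T) (z : ℝ → ℝ)
    (hz : ContinuousOn z (Set.Icc 0 T)) (hz0 : z 0 = 0) :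
    ∀ t ∈ Set.Ico (0 : ℝ) T,
      orm T z t = z (max (Abarplus T z t) (Abarminus T z t)) := by
  rintro t ⟨h0, hT'⟩
  obtain ⟨hpI, hp⟩ := Abarplus_mem hz h0 hT'
  have hm : z (Abarminus T z t) = Mminus z t := by
    have h := (Abarplus_mem hz.neg h0 hT').2
    rw [Abarminus_eq, Mminus_eq_neg]
    exact neg_eq_iff_eq_neg.1 h
  rw [orm, if_pos hT']
  split_ifs with h1 h2
  · rw [max_eq_left h1.le, hp]
  · rw [max_eq_right h2.le, hm]
  · have heq : Abarplus T z t = Abarminus T z t := le_antisymm (not_lt.1 h1) (not_lt.1 h2)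
    -- Equal right limits force `M⁺ t = M⁻ t`, and both bracket `z 0 = 0`.
    have hle : z 0 ≤ Mplus z t :=
      (Mplus_isGreatest hz h0 hT'.le).2 ⟨0, ⟨le_rfl, h0⟩, rfl⟩
    have hge : -z 0 ≤ Mplus (fun s => -z s) t :=
      (Mplus_isGreatest hz.neg h0 hT'.le).2 ⟨0, ⟨le_rfl, h0⟩, rfl⟩
    rw [← heq, hp, Mminus_eq_neg] at hm
    rw [← heq, max_self, hp]
    linarith
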